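/- Pure jump processes: suppose the generator of the semigroup P_t of an irreducible pure jump Markov process X on a countable discrete state space S has the form L g(x) = Σ_{y ≠ x} c(x,y)(g(y) − g(x)) with jump rates c(x,y) ≥ 0 satisfying sup_x Σ_{y≠x} c(x,y) < ∞, and let μ⁰ be its (unique) invariant probability measure. Let A_f be of the form (A_f g)(x) = Σ_{y≠x} a^f(x,y)(g(y)−g(x)) with a^f(x,y) = b^f(x,y) − f(x)c(x,y), where: sup_x Σ_{y≠x} |a^f(x,y)| < ∞; b^{rf}(x,y) = r·b^f(x,y) for all r > 0; μ⁰(x) Σ_{y≠x} b^f(x,y) = Σ_{y≠x} μ⁰(y) b^f(y,x) for all x ∈ S; and b^f(x,y) ≥ −ρ^f c(x,y) for some ρ^f < ∞ and all x ≠ y. Then there exists a family of Markovian perturbations X^f satisfying Assumption A (with B = G = the bounded functions on S) whose response function is R_{X^f,g}(s,t) = P_s A_f P_{t−s} g. -/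

import Mathlib

/-!
The perturbed process is taken to be the jump process with rates
`e^{-δf(x)} (c(x,y) + δ b(x,y))`, that is with bounded generator `G δ = e^{-δf} (L + δ B)`, and its
semigroup is `exp (t G δ)`.

* For small `δ > 0` the bound `b ≥ -ρ c` makes the rates nonnegative. Writing
  `exp (t G) = e^{-tΛ} exp (t (G + Λ))` with `Λ` above the total jump rate shows that the semigroup
  is positive (`expSg_nonneg`); it fixes `1`, hence is a contraction (`contraction_of_markov`).
* The weight `e^{δf} μ⁰` cancels the factor `e^{-δf}` in `G δ`, so that its invariance is the
  balance condition for the rates `c + δ b` with respect to `μ⁰` (`tsum_jump_eq_zero`,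
  `expSg_invariant`).
* The given semigroup `P` equals `exp (t L)` by uniqueness for the linear equation `u' = L u`
  (`eq_expSg`).
* `δ ↦ G δ` is differentiable at `0` in operator norm with derivative `A = B - f L`
  (`hasDerivAt_pertGen`). Duhamel's formula (`duhamel`), used once for `exp (t G δ) - exp (t L)` and
  once more for the replacement of `exp ((t - s) G δ)` by `exp ((t - s) L)` inside the integral,
  bounds the error of the linear response by a constant times `t`, and this constant tends to `0`
  (`response_bound`, `response_tendsto`).
-/

open Filter Topology BoundedContinuousFunction Set

noncomputable section

/-! ### Semigroups generated by bounded operators -/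

section Semigroup

variable {E : Type*} [NormedAddCommGroup E] [NormedSpace ℝ E]

/-- The semigroup `exp (t X)` generated by the bounded operator `X`. -/
def expSg (X : E →L[ℝ] E) (t : ℝ) : E →L[ℝ] E := NormedSpace.exp (t • X)

theorem expSg_zero (X : E →L[ℝ] E) : expSg X 0 = 1 := by
  simp [expSg, NormedSpace.exp_zero]

/-- The error constant of `response_bound` vanishes as `δ ↓ 0` when `A` is the derivative at `0` of
the family of generators. -/
theorem response_tendsto {G : ℝ → E →L[ℝ] E} {A : E →L[ℝ] E} (hG : HasDerivAt G A 0)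
    (T r : ℝ) :
    Tendsto (fun δ => (‖δ⁻¹ • (G δ - G 0) - A‖ + ‖A‖ * (‖G δ - G 0‖ * T)) * r) (𝓝[>] 0) (𝓝 0) := by
  have h1 : Tendsto (fun δ : ℝ => δ⁻¹ • (G δ - G 0)) (𝓝[>] 0) (𝓝 A) := by
    simpa using hG.tendsto_slope_zero_right
  have h2 : Tendsto (fun δ : ℝ => G δ - G 0) (𝓝[>] 0) (𝓝 0) := by
    simpa using (tendsto_nhdsWithin_of_tendsto_nhds hG.continuousAt.tendsto).sub_const (G 0)
  simpa using ((h1.sub_const A).norm.add ((h2.norm.mul_const T).const_mul ‖A‖)).mul_const r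

variable [CompleteSpace E]

theorem hasDerivAt_expSg (X : E →L[ℝ] E) (t : ℝ) :
    HasDerivAt (expSg X) (expSg X t * X) t :=
  hasDerivAt_exp_smul_const X t

theorem hasDerivAt_expSg' (X : E →L[ℝ] E) (t : ℝ) :
    HasDerivAt (expSg X) (X * expSg X t) t :=
  hasDerivAt_exp_smul_const' X t

theorem continuous_expSg (X : E →L[ℝ] E) : Continuous (expSg X) :=
  continuous_iff_continuousAt.2 fun t => (hasDerivAt_expSg X t).continuousAt

theorem expSg_add (X : E →L[ℝ] E) (s t : ℝ) : expSg X (s + t) = expSg X s * expSg X t := by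
  let _ : NormedAlgebra ℚ (E →L[ℝ] E) := NormedAlgebra.restrictScalars ℚ ℝ _
  unfold expSg
  rw [add_smul, NormedSpace.exp_add_of_commute]
  exact ((Commute.refl X).smul_left s).smul_right t

theorem hasSum_expSg (X : E →L[ℝ] E) (t : ℝ) (h : E) :
    HasSum (fun n : ℕ => ((n.factorial : ℝ)⁻¹ * t ^ n) • (X ^ n) h) (expSg X t h) := by
  have h1 := (ContinuousLinearMap.apply ℝ E h).hasSum
    (NormedSpace.exp_series_hasSum_exp' (𝕂 := ℝ) (t • X))
  refine h1.congr_fun fun n => ?_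
  rw [smul_pow, smul_smul]
  rfl

theorem hasDerivAt_expSg_apply (X : E →L[ℝ] E) (g : E) (t : ℝ) :
    HasDerivAt (fun t => expSg X t g) (X (expSg X t g)) t := by
  simpa using (hasDerivAt_expSg' X t).clm_apply (hasDerivAt_const t g)

/-- A bounded functional that annihilates the range of the generator is invariant under the
semigroup. -/
theorem expSg_invariant (X : E →L[ℝ] E) (l : E →L[ℝ] ℝ) (hl : ∀ h, l (X h) = 0) (t : ℝ) (h : E) :
    l (expSg X t h) = l h := by
  have hd : ∀ t, HasDerivAt (fun t => l (expSg X t h)) 0 t := fun t => by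
    have := l.hasFDerivAt.comp_hasDerivAt t (hasDerivAt_expSg_apply X h t)
    rwa [hl] at this
  have := is_const_of_deriv_eq_zero (fun t => (hd t).differentiableAt) (fun t => (hd t).deriv) t 0
  simpa [expSg_zero] using this

theorem expSg_fixed (X : E →L[ℝ] E) (g : E) (hg : X g = 0) (t : ℝ) : expSg X t g = g := by
  have hd : ∀ t, HasDerivAt (fun t => expSg X t g) 0 t := fun t => by
    have := (hasDerivAt_expSg X t).clm_apply (hasDerivAt_const t g)
    simpa [hg] using this
  have := is_const_of_deriv_eq_zero (fun t => (hd t).differentiableAt) (fun t => (hd t).deriv) t 0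
  simpa [expSg_zero] using this

/-- Duhamel's formula: integrate the derivative of `s ↦ exp (s X) exp ((t - s) Y) g` over
`[0, t]`. -/
theorem duhamel (X Y : E →L[ℝ] E) (g : E) (t : ℝ) :
    expSg Y t g - expSg X t g = ∫ s in (0 : ℝ)..t, expSg X s ((Y - X) (expSg Y (t - s) g)) := by
  have hd : ∀ s, HasDerivAt (fun s => expSg X s (expSg Y (t - s) g))
      (-(expSg X s ((Y - X) (expSg Y (t - s) g)))) s := fun s => by
    have h1 : HasDerivAt (fun s => expSg Y (t - s) g) (-(Y (expSg Y (t - s) g))) s :=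
      (hasDerivAt_expSg_apply Y g (t - s)).comp_const_sub t s
    have h2 := (hasDerivAt_expSg X s).clm_apply h1
    convert h2 using 1
    simp only [_root_.sub_apply, map_sub, mul_apply_eq_comp, map_neg]
    abel
  have hcY := continuous_expSg Y
  have hcX := continuous_expSg X
  have hc : Continuous fun s => expSg X s ((Y - X) (expSg Y (t - s) g)) := by fun_prop
  have := intervalIntegral.integral_eq_sub_of_hasDerivAt (a := 0) (b := t) (fun s _ => hd s)
    (hc.neg.intervalIntegrable _ _)
  rw [intervalIntegral.integral_neg] at this
  rw [← neg_inj, this]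
  simp [expSg_zero]

theorem norm_expSg_sub_le (X Y : E →L[ℝ] E) (hX : ∀ t, 0 ≤ t → ∀ h, ‖expSg X t h‖ ≤ ‖h‖)
    (hY : ∀ t, 0 ≤ t → ∀ h, ‖expSg Y t h‖ ≤ ‖h‖) (g : E) {t : ℝ} (ht : 0 ≤ t) :
    ‖expSg Y t g - expSg X t g‖ ≤ ‖Y - X‖ * ‖g‖ * t := by
  rw [duhamel]
  have := intervalIntegral.norm_integral_le_of_norm_le_const (a := 0) (b := t)
    (f := fun s => expSg X s ((Y - X) (expSg Y (t - s) g))) (C := ‖Y - X‖ * ‖g‖) ?_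
  · rwa [sub_zero, abs_of_nonneg ht] at this
  intro s hs
  rw [uIoc_of_le ht] at hs
  refine (hX s hs.1.le _).trans (((Y - X).le_opNorm _).trans ?_)
  gcongr
  exact hY _ (by linarith [hs.2]) g

/-- Quantitative first-order response of a contraction semigroup to a perturbation `Y` of its
generator `X`: the error of the linear response along `A` is controlled by the distance of
`δ⁻¹ (Y - X)` to `A` and by that of `Y` to `X`. -/
theorem response_bound (X Y A : E →L[ℝ] E) (hX : ∀ t, 0 ≤ t → ∀ h, ‖expSg X t h‖ ≤ ‖h‖)
    (hY : ∀ t, 0 ≤ t → ∀ h, ‖expSg Y t h‖ ≤ ‖h‖) (δ : ℝ) (g : E) {t T : ℝ} (ht : t ∈ Icc 0 T) :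
    ‖δ⁻¹ • (expSg Y t g - expSg X t g) - ∫ s in (0 : ℝ)..t, expSg X s (A (expSg X (t - s) g))‖
      ≤ (‖δ⁻¹ • (Y - X) - A‖ + ‖A‖ * (‖Y - X‖ * T)) * ‖g‖ * t := by
  have hcY := continuous_expSg Y
  have hcX := continuous_expSg X
  have hc1 : Continuous fun s => expSg X s ((Y - X) (expSg Y (t - s) g)) := by fun_prop
  have hc2 : Continuous fun s => expSg X s (A (expSg X (t - s) g)) := by fun_prop
  have hc3 : Continuous fun s => δ⁻¹ • expSg X s ((Y - X) (expSg Y (t - s) g)) :=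
    hc1.const_smul δ⁻¹
  rw [duhamel, ← intervalIntegral.integral_smul, ← intervalIntegral.integral_sub
    (hc3.intervalIntegrable _ _) (hc2.intervalIntegrable _ _)]
  have := intervalIntegral.norm_integral_le_of_norm_le_const (a := 0) (b := t)
    (f := fun s => δ⁻¹ • expSg X s ((Y - X) (expSg Y (t - s) g))
      - expSg X s (A (expSg X (t - s) g)))
    (C := (‖δ⁻¹ • (Y - X) - A‖ + ‖A‖ * (‖Y - X‖ * T)) * ‖g‖) ?_
  · rwa [sub_zero, abs_of_nonneg ht.1] at this
  intro s hs
  rw [uIoc_of_le ht.1] at hs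
  have hts : 0 ≤ t - s := by linarith [hs.2]
  have e : δ⁻¹ • expSg X s ((Y - X) (expSg Y (t - s) g)) - expSg X s (A (expSg X (t - s) g))
      = expSg X s ((δ⁻¹ • (Y - X) - A) (expSg Y (t - s) g)
          + A (expSg Y (t - s) g - expSg X (t - s) g)) := by
    simp only [_root_.sub_apply, _root_.smul_apply, map_add, map_sub,
      map_smul]
    abel
  rw [e]
  refine (hX s hs.1.le _).trans ((norm_add_le _ _).trans ?_)
  rw [add_mul]
  refine add_le_add (((δ⁻¹ • (Y - X) - A).le_opNorm _).trans ?_) ((A.le_opNorm _).trans ?_)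
  · gcongr
    exact hY _ hts g
  · rw [mul_assoc]
    gcongr
    refine (norm_expSg_sub_le X Y hX hY g hts).trans ?_
    rw [mul_right_comm]
    gcongr
    linarith [hs.1, ht.2]

/-- A contraction semigroup whose right derivative at `0` is the bounded operator `X` is
`exp (t X)`. -/
theorem eq_expSg (X : E →L[ℝ] E) (P : ℝ → E →ₗ[ℝ] E) (hP0 : P 0 = LinearMap.id)
    (hPsemi : ∀ s t : ℝ, 0 ≤ s → 0 ≤ t → ∀ h, P (s + t) h = P s (P t h))
    (hPcontr : ∀ t : ℝ, 0 ≤ t → ∀ h, ‖P t h‖ ≤ ‖h‖)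
    (hPgen : ∀ h, Tendsto (fun t : ℝ => t⁻¹ • (P t h - h)) (𝓝[>] 0) (𝓝 (X h)))
    {t : ℝ} (ht : 0 ≤ t) (h : E) : P t h = expSg X t h := by
  have hzero : Tendsto (fun s : ℝ => P s h - h) (𝓝[>] 0) (𝓝 0) := by
    have h1 : Tendsto (fun s : ℝ => s) (𝓝[>] 0) (𝓝 0) := tendsto_nhdsWithin_of_tendsto_nhds tendsto_id
    have h2 := h1.smul (hPgen h)
    rw [zero_smul] at h2
    refine h2.congr' ?_
    filter_upwards [self_mem_nhdsWithin] with s hs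
    rw [smul_inv_smul₀ (ne_of_gt hs)]
  have hder : ∀ u, 0 ≤ u → HasDerivWithinAt (fun u => P u h) (X (P u h)) (Ici u) u := by
    intro u hu
    rw [hasDerivWithinAt_iff_tendsto_slope, Ici_sdiff_left]
    have hsh : Tendsto (fun v : ℝ => v - u) (𝓝[>] u) (𝓝[>] 0) := by
      refine tendsto_nhdsWithin_iff.2 ⟨?_, ?_⟩
      · exact tendsto_nhdsWithin_of_tendsto_nhds
          ((continuous_sub_right u).tendsto' u 0 (sub_self u))
      · filter_upwards [self_mem_nhdsWithin] with v hv
        have hv' : u < v := hv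
        exact sub_pos.2 hv'
    refine ((hPgen (P u h)).comp hsh).congr' ?_
    filter_upwards [self_mem_nhdsWithin] with v hv
    have hv' : u < v := hv
    simp only [Function.comp_apply, slope, vsub_eq_sub]
    rw [← hPsemi _ _ (sub_pos.2 hv').le hu, sub_add_cancel]
  have hmod : ∀ u v, 0 ≤ u → u ≤ v → ‖P v h - P u h‖ ≤ ‖P (v - u) h - h‖ := by
    intro u v hu huv
    have e : P v h = P u (P (v - u) h) := by
      rw [← hPsemi _ _ hu (sub_nonneg.2 huv), add_sub_cancel]
    rw [e, ← map_sub]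
    exact hPcontr u hu _
  have hcont : ContinuousOn (fun u => P u h) (Icc 0 t) := by
    -- right and left increments at `u` are both bounded by `‖P |v - u| h - h‖`
    have hz : Tendsto (fun s : ℝ => ‖P |s| h - h‖) (𝓝 0) (𝓝 0) := by
      have h0 : ContinuousWithinAt (fun s : ℝ => ‖P |s| h - h‖) {0}ᶜ 0 := by
        have habs : Tendsto (fun s : ℝ => |s|) (𝓝[≠] 0) (𝓝[>] 0) := tendsto_abs_nhdsNE_zero
        simpa [ContinuousWithinAt, hP0] using (hzero.comp habs).norm
      have := (continuousWithinAt_compl_self.1 h0).tendsto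
      simpa [hP0] using this
    intro u hu
    rw [ContinuousWithinAt, tendsto_iff_norm_sub_tendsto_zero]
    have hsh : Tendsto (fun v : ℝ => v - u) (𝓝[Icc 0 t] u) (𝓝 0) :=
      tendsto_nhdsWithin_of_tendsto_nhds
        ((continuous_sub_right u).tendsto' u 0 (sub_self u))
    refine squeeze_zero' (Eventually.of_forall fun _ => norm_nonneg _) ?_ (hz.comp hsh)
    filter_upwards [self_mem_nhdsWithin] with v hv
    simp only [Function.comp_apply]
    rcases le_total u v with huv | hvu
    · rw [abs_of_nonneg (sub_nonneg.2 huv)]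
      exact hmod u v hu.1 huv
    · rw [abs_of_nonpos (sub_nonpos.2 hvu), neg_sub, norm_sub_rev]
      exact hmod v u hv.1 hvu
  have := ODE_solution_unique (v := fun _ x => X x) (K := ‖X‖₊) (a := 0) (b := t)
    (f := fun u => P u h) (g := fun u => expSg X u h) (fun _ => X.lipschitz) hcont
    (fun u hu => hder u hu.1)
    (fun u _ => (hasDerivAt_expSg_apply X h u).continuousAt.continuousWithinAt)
    (fun u _ => (hasDerivAt_expSg_apply X h u).hasDerivWithinAt) (by simp [hP0, expSg_zero])
  exact this ⟨ht, le_rfl⟩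

end Semigroup

/-! ### Perturbation of a bounded generator by a multiplicative factor -/

section Perturbation

variable {R : Type*} [NormedRing R] [NormedAlgebra ℝ R]

/-- The perturbed generator `e^{-δf} (L + δ B)` on a Banach algebra `R`. The factor `e^{-δf}` is the
exponential of `R`, so that smoothness in `δ` holds in operator norm. -/
def pertGen (f : R) (L B : R →L[ℝ] R) (δ : ℝ) : R →L[ℝ] R :=
  ContinuousLinearMap.mul ℝ R (NormedSpace.exp (δ • (-f))) * (L + δ • B)

/-- The operator-norm derivative of the perturbed generator at `δ = 0` is `B - f L`, which for jump
operators has rates `b(x,y) - f(x) c(x,y)`. -/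
theorem hasDerivAt_pertGen [CompleteSpace R] (f : R) (L B : R →L[ℝ] R) :
    HasDerivAt (pertGen f L B) (B - ContinuousLinearMap.mul ℝ R f * L) 0 := by
  have h1 : HasDerivAt (fun δ : ℝ => NormedSpace.exp (δ • (-f))) (-f) 0 := by
    have := hasDerivAt_exp_smul_const (𝕂 := ℝ) (-f) (0 : ℝ)
    rwa [zero_smul, NormedSpace.exp_zero, one_mul] at this
  have h2 : HasDerivAt (fun δ : ℝ => ContinuousLinearMap.mul ℝ R (NormedSpace.exp (δ • (-f))))
      (ContinuousLinearMap.mul ℝ R (-f)) 0 :=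
    (ContinuousLinearMap.mul ℝ R).hasFDerivAt.comp_hasDerivAt (0 : ℝ) h1
  have h3 : HasDerivAt (fun δ : ℝ => L + δ • B) B 0 := by
    simpa using ((hasDerivAt_id (0 : ℝ)).smul_const B).const_add L
  refine (h2.mul h3).congr_deriv ?_
  ext h
  simp [NormedSpace.exp_zero]
  abel

end Perturbation

/-! ### Jump generators on bounded functions -/

section Jump

variable {S : Type*} [TopologicalSpace S]

theorem summable_mul_bdd {k : S → ℝ} (hk : Summable fun y => |k y|) (h : S →ᵇ ℝ) :
    Summable fun y => k y * h y := by
  refine Summable.of_norm_bounded (hk.mul_right ‖h‖) fun y => ?_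
  rw [norm_mul, Real.norm_eq_abs]
  gcongr
  exact h.norm_coe_le_norm y

theorem summable_mul_diff {k : S → ℝ} (hk : Summable fun y => |k y|) (h : S →ᵇ ℝ) (x : S) :
    Summable fun y => k y * (h y - h x) := by
  simp only [mul_sub]
  exact (summable_mul_bdd hk h).sub (hk.of_abs.mul_right _)

/-- A positive operator fixing `1` is a contraction for the supremum norm. -/
theorem contraction_of_markov (Q : (S →ᵇ ℝ) →L[ℝ] (S →ᵇ ℝ)) (h1 : Q 1 = 1)
    (hpos : ∀ h : S →ᵇ ℝ, (∀ x, 0 ≤ h x) → ∀ x, 0 ≤ Q h x) (h : S →ᵇ ℝ) : ‖Q h‖ ≤ ‖h‖ := by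
  refine (BoundedContinuousFunction.norm_le (norm_nonneg _)).2 fun x => ?_
  have hb : ∀ y, |h y| ≤ ‖h‖ := fun y => h.norm_coe_le_norm y
  have u := hpos (‖h‖ • 1 - h) (fun y => by simpa using (abs_le.1 (hb y)).2) x
  have l := hpos (‖h‖ • 1 + h) (fun y => by
    have := (abs_le.1 (hb y)).1
    simp
    linarith) x
  rw [map_sub, map_smul, h1] at u
  rw [map_add, map_smul, h1] at l
  simp at u l
  rw [Real.norm_eq_abs, abs_le]
  constructor <;> linarith

/-- The functional `h ↦ ∑ x, w x h x` for an absolutely summable weight `w`. -/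
def weightFun (w : S → ℝ) (hw : Summable fun x => |w x|) : (S →ᵇ ℝ) →L[ℝ] ℝ :=
  LinearMap.mkContinuous
    { toFun := fun h => ∑' x, w x * h x
      map_add' := fun h₁ h₂ => by
        rw [← (summable_mul_bdd hw h₁).tsum_add (summable_mul_bdd hw h₂)]
        exact tsum_congr fun y => by simp [mul_add]
      map_smul' := fun r h => by
        rw [RingHom.id_apply, smul_eq_mul, ← tsum_mul_left]
        exact tsum_congr fun y => by simp; ring }
    (∑' x, |w x|) fun h => by
      rw [← tsum_mul_right]
      refine tsum_of_norm_bounded (hw.mul_right ‖h‖).hasSum fun y => ?_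
      rw [norm_mul, Real.norm_eq_abs]
      gcongr
      exact h.norm_coe_le_norm y

theorem weightFun_apply (w : S → ℝ) (hw : Summable fun x => |w x|) (h : S →ᵇ ℝ) :
    weightFun w hw h = ∑' x, w x * h x := rfl

theorem exp_smul_neg_apply (f : S →ᵇ ℝ) (δ : ℝ) (x : S) :
    (NormedSpace.exp (δ • (-f)) : S →ᵇ ℝ) x = Real.exp (-(δ * f x)) := by
  let _ : NormedAlgebra ℚ (S →ᵇ ℝ) := NormedAlgebra.restrictScalars ℚ ℝ _
  let ev : (S →ᵇ ℝ) →+* ℝ :=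
    { toFun := fun g => g x
      map_one' := rfl
      map_mul' := fun _ _ => rfl
      map_zero' := rfl
      map_add' := fun _ _ => rfl }
  have := NormedSpace.map_exp ev (evalCLM ℝ x).continuous (δ • (-f))
  rw [← Real.exp_eq_exp_ℝ] at this
  have e : ev (δ • (-f)) = -(δ * f x) := by
    change δ * (-(f x)) = _
    ring
  rwa [e] at this

theorem pertGen_apply (f : S →ᵇ ℝ) (L B : (S →ᵇ ℝ) →L[ℝ] (S →ᵇ ℝ)) (δ : ℝ) (h : S →ᵇ ℝ) (x : S) :
    pertGen f L B δ h x = Real.exp (-(δ * f x)) * (L h x + δ * B h x) := by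
  rw [← exp_smul_neg_apply f δ x]
  rfl

theorem pertGen_zero (f : S →ᵇ ℝ) (L B : (S →ᵇ ℝ) →L[ℝ] (S →ᵇ ℝ)) : pertGen f L B 0 = L := by
  ext h x
  simp [pertGen_apply]

/-- The balance condition makes `μ` an invariant measure of the jump generator with rates `k`:
exchange the two sums. -/
theorem tsum_jump_eq_zero (k : S → S → ℝ) (C : ℝ) (hk : ∀ x, Summable (k x))
    (hC : ∀ x, (∑' y, k x y) ≤ C) (hk0 : ∀ x y, 0 ≤ k x y)
    (μ : S → ℝ) (hμ : ∀ x, 0 ≤ μ x) (hμs : Summable μ)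
    (hbal : ∀ x, μ x * (∑' y, k x y) = ∑' y, μ y * k y x) (h : S →ᵇ ℝ) :
    (∑' x, μ x * ∑' y, k x y * (h y - h x)) = 0 := by
  have hpos : ∀ p : S × S, 0 ≤ μ p.1 * k p.1 p.2 := fun p => mul_nonneg (hμ _) (hk0 _ _)
  have hprod : Summable fun p : S × S => μ p.1 * k p.1 p.2 := by
    refine (summable_prod_of_nonneg hpos).2 ⟨fun x => (hk x).mul_left (μ x), ?_⟩
    refine Summable.of_nonneg_of_le (fun x => tsum_nonneg fun y => hpos (x, y))
      (fun x => ?_) (hμs.mul_right C)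
    simp only [tsum_mul_left]
    exact mul_le_mul_of_nonneg_left (hC x) (hμ x)
  have hbd : ∀ g : S × S → ℝ, (∀ p, |g p| ≤ ‖h‖) →
      Summable fun p : S × S => μ p.1 * k p.1 p.2 * g p := by
    intro g hg
    refine Summable.of_norm_bounded (hprod.mul_right ‖h‖) fun p => ?_
    rw [norm_mul, Real.norm_of_nonneg (hpos p)]
    exact mul_le_mul_of_nonneg_left (hg p) (hpos p)
  have s1 : Summable fun p : S × S => μ p.1 * k p.1 p.2 * h p.2 :=
    hbd _ fun p => h.norm_coe_le_norm p.2
  have s2 : Summable fun p : S × S => μ p.1 * k p.1 p.2 * h p.1 :=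
    hbd _ fun p => h.norm_coe_le_norm p.1
  have e : ∀ x, (μ x * ∑' y, k x y * (h y - h x))
      = (∑' y, μ x * k x y * h y) - ∑' y, μ x * k x y * h x := by
    intro x
    have f1 : Summable fun y => μ x * k x y * h y := s1.prod_factor x
    have f2 : Summable fun y => μ x * k x y * h x := s2.prod_factor x
    rw [← tsum_mul_left, ← f1.tsum_sub f2]
    exact tsum_congr fun y => by ring
  have p1 : Summable fun x => ∑' y, μ x * k x y * h y := s1.prod
  have p2 : Summable fun x => ∑' y, μ x * k x y * h x := s2.prod
  have hcomm : (∑' x, ∑' y, μ x * k x y * h y) = ∑' y, ∑' x, μ x * k x y * h y :=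
    (Summable.tsum_comm (f := fun x y => μ x * k x y * h y) s1).symm
  rw [tsum_congr e, p1.tsum_sub p2, sub_eq_zero, hcomm]
  refine tsum_congr fun x => ?_
  rw [tsum_mul_right, tsum_mul_right, ← hbal, tsum_mul_left]

/-- Uniformization: if `G + Λ` is positive then so is `exp (t G) = e^{-tΛ} exp (t (G + Λ))`. -/
theorem expSg_nonneg (G : (S →ᵇ ℝ) →L[ℝ] (S →ᵇ ℝ)) (Λ : ℝ)
    (hG : ∀ h : S →ᵇ ℝ, (∀ x, 0 ≤ h x) → ∀ x, 0 ≤ G h x + Λ * h x)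
    {t : ℝ} (ht : 0 ≤ t) (h : S →ᵇ ℝ) (hh : ∀ x, 0 ≤ h x) (x : S) : 0 ≤ expSg G t h x := by
  set K : (S →ᵇ ℝ) →L[ℝ] (S →ᵇ ℝ) := G + Λ • 1 with hK
  have hpow : ∀ n : ℕ, ∀ y, 0 ≤ (K ^ n) h y := by
    intro n
    induction n with
    | zero => simpa using hh
    | succ n ih =>
      intro y
      rw [pow_succ']
      simpa [hK] using hG _ ih y
  have hKpos : 0 ≤ expSg K t h x := by
    refine ((evalCLM ℝ x).hasSum (hasSum_expSg K t h)).nonneg fun n => ?_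
    have h1 := hpow n x
    have h2 : 0 ≤ ((n.factorial : ℝ)⁻¹ * t ^ n) * (K ^ n) h x := by positivity
    exact h2
  have hsplit : expSg G t = Real.exp (-(t * Λ)) • expSg K t := by
    let _ : NormedAlgebra ℚ ((S →ᵇ ℝ) →L[ℝ] (S →ᵇ ℝ)) := NormedAlgebra.restrictScalars ℚ ℝ _
    have e : t • G = t • K + algebraMap ℝ _ (-(t * Λ)) := by
      rw [hK, Algebra.algebraMap_eq_smul_one, smul_add, smul_smul]
      module
    unfold expSg
    rw [e, NormedSpace.exp_add_of_commute (Algebra.commutes _ _).symm, ← NormedSpace.algebraMap_exp_comm,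
      ← Real.exp_eq_exp_ℝ, ← Algebra.commutes, ← Algebra.smul_def]
  rw [hsplit]
  exact mul_nonneg (Real.exp_pos _).le hKpos

variable [DiscreteTopology S]

/-- The bounded operator `h ↦ (x ↦ ∑ y, k x y (h y - h x))` attached to signed jump rates `k`
whose absolute row sums are bounded by `C`. -/
def jumpOp (k : S → S → ℝ) (C : ℝ) (hk : ∀ x, Summable fun y => |k x y|)
    (hC : ∀ x, (∑' y, |k x y|) ≤ C) : (S →ᵇ ℝ) →L[ℝ] (S →ᵇ ℝ) :=
  have bd : ∀ (h : S →ᵇ ℝ) (x : S), ‖∑' y, k x y * (h y - h x)‖ ≤ C * (2 * ‖h‖) := fun h x => by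
    refine (tsum_of_norm_bounded ((hk x).mul_right (2 * ‖h‖)).hasSum fun y => ?_).trans ?_
    · rw [norm_mul, Real.norm_eq_abs, two_mul]
      gcongr
      exact (norm_sub_le _ _).trans (add_le_add (h.norm_coe_le_norm y) (h.norm_coe_le_norm x))
    · rw [tsum_mul_right]
      gcongr
      exact hC x
  LinearMap.mkContinuousOfExistsBound
    { toFun := fun h => ofNormedAddCommGroupDiscrete (fun x => ∑' y, k x y * (h y - h x)) _ (bd h)
      map_add' := fun h₁ h₂ => by
        ext x
        simp only [coe_ofNormedAddCommGroupDiscrete, BoundedContinuousFunction.coe_add,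
          Pi.add_apply]
        rw [← (summable_mul_diff (hk x) h₁ x).tsum_add (summable_mul_diff (hk x) h₂ x)]
        exact tsum_congr fun y => by ring
      map_smul' := fun r h => by
        ext x
        simp only [coe_ofNormedAddCommGroupDiscrete, BoundedContinuousFunction.coe_smul,
          RingHom.id_apply, smul_eq_mul]
        rw [← tsum_mul_left]
        exact tsum_congr fun y => by ring }
    ⟨|C| * 2, fun h => by
      refine (BoundedContinuousFunction.norm_le (by positivity)).2 fun x => (bd h x).trans ?_
      rw [mul_assoc]
      gcongr
      exact le_abs_self C⟩

theorem jumpOp_apply (k : S → S → ℝ) (C : ℝ) (hk : ∀ x, Summable fun y => |k x y|)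
    (hC : ∀ x, (∑' y, |k x y|) ≤ C) (h : S →ᵇ ℝ) (x : S) :
    jumpOp k C hk hC h x = ∑' y, k x y * (h y - h x) := rfl

/-- A jump generator with nonnegative rates and total rate at most `C` becomes positive after
adding `C`, as uniformization requires. -/
theorem jumpOp_add_nonneg (k : S → S → ℝ) (C : ℝ) (hk : ∀ x, Summable fun y => |k x y|)
    (hC : ∀ x, (∑' y, |k x y|) ≤ C) (hk0 : ∀ x y, 0 ≤ k x y) (h : S →ᵇ ℝ) (hh : ∀ x, 0 ≤ h x)
    (x : S) : 0 ≤ jumpOp k C hk hC h x + C * h x := by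
  rw [jumpOp_apply]
  have e : (∑' y, k x y * (h y - h x)) = (∑' y, k x y * h y) - (∑' y, |k x y|) * h x := by
    simp only [mul_sub]
    rw [(summable_mul_bdd (hk x) h).tsum_sub ((hk x).of_abs.mul_right _), tsum_mul_right]
    simp only [abs_of_nonneg (hk0 x _)]
  have h1 : 0 ≤ ∑' y, k x y * h y := tsum_nonneg fun y => mul_nonneg (hk0 x y) (hh y)
  have h2 := mul_le_mul_of_nonneg_right (hC x) (hh x)
  rw [e]
  linarith

end Jump
/-- Proposition `prop6`, pure jump processes on a discrete
state space: let `X` be an irreducible pure jump Markov process on a countable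
discrete space `S` with uniformly bounded total jump rates `c(x,y)`, semigroup
`P_t` (with generator `L g(x) = Σ_y c(x,y)(g(y)−g(x))`) and unique invariant
probability measure `μ⁰`.  Given `A_f g(x) = Σ_y a^f(x,y)(g(y)−g(x))` with
`a^f(x,y) = b^f(x,y) − f(x)c(x,y)` such that `sup_x Σ_y |a^f(x,y)| < ∞`, the
balance condition `μ⁰(x)Σ_y b^f(x,y) = Σ_y μ⁰(y)b^f(y,x)` holds, and
`b^f(x,y) ≥ −ρ^f c(x,y)` (the scaling `b^{rf} = r b^f` being built into the
family `b^{δf} = δ b^f`), there is a family of Markovian perturbations `X^f`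
satisfying Assumption A whose response function is
`R_{X^f,g}(s,t) = P_s A_f P_{t−s} g`. -/
theorem jump_process_response {S : Type*} [TopologicalSpace S] [DiscreteTopology S]
    [Countable S] [Nonempty S]
    -- the jump rates `c(x,y) ≥ 0`, `x ≠ y`, with bounded total jump rate:
    (c : S → S → ℝ) (hcdiag : ∀ x, c x x = 0) (hcpos : ∀ x y, x ≠ y → 0 ≤ c x y)
    (hcsum : ∀ x, Summable (fun y => c x y)) (M : ℝ) (hM : ∀ x, (∑' y, c x y) ≤ M)
    -- irreducibility:
    (hirr : ∀ x y : S, x ≠ y → Relation.TransGen (fun a b => 0 < c a b) x y)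
    -- the invariant probability measure `μ⁰`:
    (μ0 : S → ℝ) (hμpos : ∀ x, 0 < μ0 x) (hμsum : Summable μ0) (hμ1 : ∑' x, μ0 x = 1)
    (hμc : ∀ x, Summable (fun y => μ0 y * c y x))
    (hμinv : ∀ x, μ0 x * (∑' y, c x y) = ∑' y, μ0 y * c y x)
    -- the Markov semigroup `P_t` on `C_b = (S →ᵇ ℝ)`, generated by `L`:
    (P : ℝ → (S →ᵇ ℝ) →ₗ[ℝ] (S →ᵇ ℝ))
    (hP0 : P 0 = LinearMap.id)
    (hPsemi : ∀ s t : ℝ, 0 ≤ s → 0 ≤ t → ∀ h, P (s + t) h = P s (P t h))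
    (hPcontr : ∀ t : ℝ, 0 ≤ t → ∀ h, ‖P t h‖ ≤ ‖h‖)
    (hPone : ∀ t : ℝ, 0 ≤ t → P t 1 = 1)
    (hPpos : ∀ t : ℝ, 0 ≤ t → ∀ h : S →ᵇ ℝ, (∀ x, 0 ≤ h x) → ∀ x, 0 ≤ P t h x)
    (hPgen : ∀ h k : S →ᵇ ℝ, (∀ x, k x = ∑' y, c x y * (h y - h x)) →
      Tendsto (fun t : ℝ => t⁻¹ • (P t h - h)) (𝓝[>] 0) (𝓝 k))
    -- the perturbation direction `f` and the family `b^f` with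
    -- `a^f(x,y) = b^f(x,y) − f(x)c(x,y)`:
    (f : S →ᵇ ℝ) (b : S → S → ℝ) (hbdiag : ∀ x, b x x = 0)
    (hasum : ∀ x, Summable (fun y => |b x y - f x * c x y|))
    (Ma : ℝ) (hMa : ∀ x, (∑' y, |b x y - f x * c x y|) ≤ Ma)
    (hbsum : ∀ x, Summable fun y => b x y) (hbsum' : ∀ x, Summable fun y => μ0 y * b y x)
    (hbal : ∀ x, μ0 x * (∑' y, b x y) = ∑' y, μ0 y * b y x)
    (ρ : ℝ) (hρ : ∀ x y, x ≠ y → -(ρ * c x y) ≤ b x y) :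
    -- there is a family of Markovian perturbations `X^{δf}` (for small `δ`)
    -- satisfying Assumption A, with invariant measures `μ^{δf} = e^{δf}μ⁰`:
    ∃ δ0 : ℝ, 0 < δ0 ∧ ∃ Q : ℝ → ℝ → (S →ᵇ ℝ) →ₗ[ℝ] (S →ᵇ ℝ),
      (∀ δ ∈ Ioo (0 : ℝ) δ0,
        (Q δ 0 = LinearMap.id) ∧
        (∀ s t : ℝ, 0 ≤ s → 0 ≤ t → ∀ h, Q δ (s + t) h = Q δ s (Q δ t h)) ∧
        (∀ t : ℝ, 0 ≤ t → ∀ h, ‖Q δ t h‖ ≤ ‖h‖) ∧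
        (∀ t : ℝ, 0 ≤ t → Q δ t 1 = 1) ∧
        (∀ t : ℝ, 0 ≤ t → ∀ h : S →ᵇ ℝ, (∀ x, 0 ≤ h x) → ∀ x, 0 ≤ Q δ t h x) ∧
        (∀ h : S →ᵇ ℝ, Tendsto (fun t : ℝ => Q δ t h) (𝓝[>] 0) (𝓝 h)) ∧
        (∀ t : ℝ, 0 ≤ t → ∀ h : S →ᵇ ℝ,
          ∑' x, Real.exp (δ * f x) * μ0 x * (Q δ t h) x
            = ∑' x, Real.exp (δ * f x) * μ0 x * h x)) ∧
      -- with the response function `R_{X^f,g}(s,t) = P_s A_f P_{t−s} g`: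
      ∃ Af : (S →ᵇ ℝ) →ₗ[ℝ] (S →ᵇ ℝ),
        (∀ h : S →ᵇ ℝ, ∀ x, Af h x = ∑' y, (b x y - f x * c x y) * (h y - h x)) ∧
        (∀ g : S →ᵇ ℝ, ContinuousOn (fun s : ℝ => Af (P s g)) (Ici (0 : ℝ))) ∧
        (∀ T : ℝ, 0 ≤ T → ∀ g : S →ᵇ ℝ, ∃ η : ℝ → ℝ,
          Tendsto η (𝓝[>] 0) (𝓝 0) ∧
          ∀ t ∈ Icc (0 : ℝ) T, ∀ δ ∈ Ioo (0 : ℝ) δ0,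
            ‖δ⁻¹ • (Q δ t g - P t g)
              - ∫ s in (0 : ℝ)..t, P s (Af (P (t - s) g))‖ ≤ η δ * t) := by
  have hc0 : ∀ x y, 0 ≤ c x y := fun x y => by
    rcases eq_or_ne x y with rfl | hxy
    · rw [hcdiag]
    · exact hcpos x y hxy
  have hρ' : ∀ x y, -(ρ * c x y) ≤ b x y := fun x y => by
    rcases eq_or_ne x y with rfl | hxy
    · simp [hcdiag, hbdiag]
    · exact hρ x y hxy
  have hM0 : 0 ≤ M := (tsum_nonneg (hc0 (Classical.arbitrary S))).trans (hM _)
  have hca : ∀ x, Summable fun y => |c x y| := fun x => (hcsum x).abs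
  have hcM : ∀ x, (∑' y, |c x y|) ≤ M := fun x => by simpa only [abs_of_nonneg (hc0 x _)] using hM x
  have hba : ∀ x, Summable fun y => |b x y| := fun x => (hbsum x).abs
  have hbM : ∀ x, (∑' y, |b x y|) ≤ Ma + ‖f‖ * M := fun x => by
    have h1 : ∀ y, |b x y| ≤ |b x y - f x * c x y| + ‖f‖ * c x y := fun y => by
      have e : b x y = (b x y - f x * c x y) + f x * c x y := by ring
      conv_lhs => rw [e]
      refine (abs_add_le _ _).trans ?_
      rw [abs_mul (f x), abs_of_nonneg (hc0 x y)]
      gcongr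
      · exact hc0 x y
      · exact f.norm_coe_le_norm x
    refine ((hba x).tsum_le_tsum h1 ((hasum x).add ((hcsum x).mul_left _))).trans ?_
    rw [(hasum x).tsum_add ((hcsum x).mul_left _), tsum_mul_left]
    have := hM x
    have := hMa x
    gcongr
  set Cb := Ma + ‖f‖ * M with hCb
  have hCb0 : 0 ≤ Cb := (tsum_nonneg fun y => abs_nonneg _).trans (hbM (Classical.arbitrary S))
  obtain ⟨L, hL⟩ : ∃ L : (S →ᵇ ℝ) →L[ℝ] (S →ᵇ ℝ), ∀ h x, L h x = ∑' y, c x y * (h y - h x) :=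
    ⟨jumpOp c M hca hcM, fun _ _ => rfl⟩
  obtain ⟨B, hB⟩ : ∃ B : (S →ᵇ ℝ) →L[ℝ] (S →ᵇ ℝ), ∀ h x, B h x = ∑' y, b x y * (h y - h x) :=
    ⟨jumpOp b Cb hba hbM, fun _ _ => rfl⟩
  -- the perturbed process has jump rates `e^{-δf(x)} (c(x,y) + δ b(x,y))`
  obtain ⟨G, A, hG0, hGder, hGexp, hA⟩ : ∃ (G : ℝ → (S →ᵇ ℝ) →L[ℝ] (S →ᵇ ℝ))
      (A : (S →ᵇ ℝ) →L[ℝ] (S →ᵇ ℝ)), G 0 = L ∧ HasDerivAt G A 0 ∧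
      (∀ δ h x, G δ h x = Real.exp (-(δ * f x)) * (L h x + δ * B h x)) ∧
      (∀ h x, A h x = B h x - f x * L h x) :=
    ⟨pertGen f L B, _, pertGen_zero f L B, hasDerivAt_pertGen f L B, pertGen_apply f L B,
      fun h x => rfl⟩
  have hPL : ∀ t, 0 ≤ t → ∀ h, P t h = expSg L t h := fun t ht h =>
    eq_expSg L P hP0 hPsemi hPcontr (fun h => hPgen h (L h) (hL h)) ht h
  have hLcontr : ∀ t, 0 ≤ t → ∀ h, ‖expSg L t h‖ ≤ ‖h‖ := fun t ht h => by
    rw [← hPL t ht]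
    exact hPcontr t ht h
  -- for `δ < 1 / (|ρ| + 1)` one has `δ ρ ≤ 1`, so the perturbed rates are nonnegative
  have hδ0 : 0 < (|ρ| + 1)⁻¹ := by positivity
  have hrate : ∀ δ ∈ Ioo (0 : ℝ) (|ρ| + 1)⁻¹, ∀ x y, 0 ≤ c x y + δ * b x y := by
    intro δ hδ x y
    have h1 : δ * (|ρ| + 1) ≤ 1 := by
      have := mul_le_mul_of_nonneg_right hδ.2.le (by positivity : (0 : ℝ) ≤ |ρ| + 1)
      rwa [inv_mul_cancel₀ (by positivity)] at this
    have h2 : δ * ρ ≤ 1 := by nlinarith [le_abs_self ρ, hδ.1]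
    nlinarith [mul_le_mul_of_nonneg_left (hρ' x y) hδ.1.le, hc0 x y]
  have hksum : ∀ δ : ℝ, ∀ x, Summable fun y => c x y + δ * b x y := fun δ x =>
    (hcsum x).add ((hbsum x).mul_left δ)
  have hkabs : ∀ δ : ℝ, ∀ x, Summable fun y => |c x y + δ * b x y| := fun δ x => (hksum δ x).abs
  have hkM : ∀ δ ∈ Ioo (0 : ℝ) (|ρ| + 1)⁻¹, ∀ x, (∑' y, |c x y + δ * b x y|) ≤ M + δ * Cb := by
    intro δ hδ x
    refine ((hkabs δ x).tsum_le_tsum (fun y => ?_) ((hca x).add ((hba x).mul_left δ))).trans ?_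
    · refine (abs_add_le _ _).trans ?_
      rw [abs_mul, abs_of_pos hδ.1]
    · rw [(hca x).tsum_add ((hba x).mul_left δ), tsum_mul_left]
      have := hcM x
      have := hbM x
      have := hδ.1.le
      gcongr
  have hGapply : ∀ (δ : ℝ) (h : S →ᵇ ℝ) (x : S),
      G δ h x = Real.exp (-(δ * f x)) * ∑' y, (c x y + δ * b x y) * (h y - h x) := by
    intro δ h x
    have e : (∑' y, (c x y + δ * b x y) * (h y - h x)) = L h x + δ * B h x := by
      rw [hL, hB]
      rw [← tsum_mul_left, ← (summable_mul_diff (hca x) h x).tsum_add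
        ((summable_mul_diff (hba x) h x).mul_left δ)]
      exact tsum_congr fun y => by ring
    rw [e, hGexp]
  have hGone : ∀ δ, G δ 1 = 0 := fun δ => by
    ext x
    rw [hGapply]
    simp
  have hQone : ∀ δ t, expSg (G δ) t 1 = 1 := fun δ t => expSg_fixed _ _ (hGone δ) t
  have hQpos : ∀ δ ∈ Ioo (0 : ℝ) (|ρ| + 1)⁻¹, ∀ t : ℝ, 0 ≤ t → ∀ h : S →ᵇ ℝ, (∀ x, 0 ≤ h x) →
      ∀ x, 0 ≤ expSg (G δ) t h x := by
    intro δ hδ t ht h hh x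
    have hC0 : 0 ≤ M + δ * Cb := add_nonneg hM0 (mul_nonneg hδ.1.le hCb0)
    refine expSg_nonneg (G δ) (Real.exp (δ * ‖f‖) * (M + δ * Cb)) (fun h hh x => ?_) ht h hh x
    have h1 := jumpOp_add_nonneg _ _ (hkabs δ) (hkM δ hδ) (hrate δ hδ) h hh x
    rw [jumpOp_apply] at h1
    rw [hGapply]
    have hu0 := (Real.exp_pos (-(δ * f x))).le
    have hu1 : Real.exp (-(δ * f x)) ≤ Real.exp (δ * ‖f‖) := by
      have h5 := (neg_le_abs _).trans (f.norm_coe_le_norm x)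
      have h6 := mul_le_mul_of_nonneg_left h5 hδ.1.le
      exact Real.exp_le_exp.2 (by linarith)
    have h2 := mul_nonneg hu0 h1
    have h3 := mul_nonneg (sub_nonneg.2 hu1) (mul_nonneg hC0 (hh x))
    linarith
  have hQcontr : ∀ δ ∈ Ioo (0 : ℝ) (|ρ| + 1)⁻¹, ∀ t : ℝ, 0 ≤ t → ∀ h, ‖expSg (G δ) t h‖ ≤ ‖h‖ :=
    fun δ hδ t ht => contraction_of_markov _ (hQone δ t) (hQpos δ hδ t ht)
  refine ⟨(|ρ| + 1)⁻¹, hδ0, fun δ t => (expSg (G δ) t : (S →ᵇ ℝ) →ₗ[ℝ] (S →ᵇ ℝ)), ?_,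
    (A : (S →ᵇ ℝ) →ₗ[ℝ] (S →ᵇ ℝ)), ?_, ?_, ?_⟩
  · intro δ hδ
    refine ⟨?_, ?_, hQcontr δ hδ, fun t _ => hQone δ t, hQpos δ hδ, ?_, ?_⟩
    · ext h x
      simp [expSg_zero]
    · intro s t _ _ h
      simp [expSg_add]
    · intro h
      have := (hasDerivAt_expSg_apply (G δ) h 0).continuousAt.tendsto
      simp only [expSg_zero, one_apply_eq_self] at this
      exact tendsto_nhdsWithin_of_tendsto_nhds this
    · intro t _ h
      have hw : Summable fun x => |Real.exp (δ * f x) * μ0 x| := by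
        refine Summable.of_nonneg_of_le (fun x => abs_nonneg _) (fun x => ?_)
          (hμsum.mul_left (Real.exp (δ * ‖f‖)))
        rw [abs_of_nonneg (mul_nonneg (Real.exp_pos _).le (hμpos x).le)]
        have := (hμpos x).le
        have := hδ.1.le
        have := (le_abs_self _).trans (f.norm_coe_le_norm x)
        gcongr
      refine expSg_invariant (G δ) (weightFun _ hw) (fun h => ?_) t h
      have hbalδ : ∀ x, μ0 x * (∑' y, (c x y + δ * b x y))
          = ∑' y, μ0 y * (c y x + δ * b y x) := fun x => by
        rw [(hcsum x).tsum_add ((hbsum x).mul_left δ), tsum_mul_left, mul_add, hμinv,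
          mul_left_comm, hbal, ← tsum_mul_left, ← (hμc x).tsum_add ((hbsum' x).mul_left δ)]
        exact tsum_congr fun y => by ring
      have hz := tsum_jump_eq_zero (fun x y => c x y + δ * b x y) (M + δ * Cb) (hksum δ)
        (fun x => by simpa only [abs_of_nonneg (hrate δ hδ x _)] using hkM δ hδ x)
        (hrate δ hδ) μ0 (fun x => (hμpos x).le) hμsum hbalδ h
      rw [weightFun_apply, ← hz]
      refine tsum_congr fun x => ?_
      rw [hGapply, Real.exp_neg]
      field_simp
  · intro h x
    change A h x = _
    rw [hA, hL, hB, ← tsum_mul_left, ← (summable_mul_diff (hba x) h x).tsum_sub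
      ((summable_mul_diff (hca x) h x).mul_left (f x))]
    exact tsum_congr fun y => by ring
  · intro g
    have hcL := continuous_expSg L
    have hcA : Continuous fun s => A (expSg L s g) := by fun_prop
    refine hcA.continuousOn.congr fun s hs => ?_
    rw [hPL s hs]
    rfl
  · intro T hT g
    refine ⟨fun δ => (‖δ⁻¹ • (G δ - L) - A‖ + ‖A‖ * (‖G δ - L‖ * T)) * ‖g‖, ?_, ?_⟩
    · have := response_tendsto hGder T ‖g‖
      rwa [hG0] at this
    · intro t ht δ hδ
      have h1 := response_bound L (G δ) A hLcontr (hQcontr δ hδ) δ g ht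
      have h2 : (∫ s in (0 : ℝ)..t, P s (A (P (t - s) g)))
          = ∫ s in (0 : ℝ)..t, expSg L s (A (expSg L (t - s) g)) := by
        refine intervalIntegral.integral_congr fun s hs => ?_
        rw [uIcc_of_le ht.1] at hs
        rw [hPL _ (sub_nonneg.2 hs.2), hPL s hs.1]
      rw [← h2, ← hPL t ht.1] at h1
      exact h1

end
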